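/- Let k be a continuous probability density with support [−1,1] that is strictly positive on (−1,1); for s ∈ (−1,1] let (φ(s), ψ(s)) be the solution of φ(s)∫_{−1}^s k(u)du + ψ(s)∫_{−1}^s u·k(u)du = 1 and φ(s)∫_{−1}^s u·k(u)du + ψ(s)∫_{−1}^s u²k(u)du = 0, and set k^{(s)}(u) = φ(s)k(u) + ψ(s)u·k(u). Let λ : ℝ → ℝ be bounded and uniformly continuous. Then sup_{x ∈ [0, b]} | ∫_{−1}^{x/b} k^{(x/b)}(y)·λ(x − b·y) dy − λ(x) | → 0 as b → 0+. -/

import Mathlib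

open MeasureTheory Filter Set

/-!
The moment system says that `∫ y in S, (a + c * y) * k^{(s)} y = a` for every affine function, where
`S = [-1, s]`; in particular `φ(s)` is the `k`-weighted integral of `(φ(s) + ψ(s) u)²`. Hence, for
`S ⊆ T` with solutions `P_S`, `P_T` (as affine functions),
`0 ≤ ∫_S (P_T - P_S)² k ≤ φ_T - 2 φ_T + φ_S`, so that `φ` decreases with the domain and
`φ(s) ≤ φ(0)` on `[0, 1]`. By AM-GM, `2 |P_S| k ≤ (1 + P_S²) k`, so the `L¹` norms of the boundary
kernels are bounded by `(∫ k + φ(0)) / 2`, uniformly in `s`. A family of kernels of mass one with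
bounded `L¹` norms turns the modulus of continuity of `λ` into a uniform bound for the bias.
-/

/-- The moment system defining the boundary correction coefficients `(φ, ψ)` of the kernel `k`
truncated to `S`; the boundary kernel `k^{(s)}` uses `S = [-1, s]`. -/
structure SolvesBoundarySystem (k : ℝ → ℝ) (S : Set ℝ) (φ ψ : ℝ) : Prop where
  zeroth_moment : φ * (∫ u in S, k u) + ψ * (∫ u in S, u * k u) = 1
  first_moment : φ * (∫ u in S, u * k u) + ψ * (∫ u in S, u ^ 2 * k u) = 0

/-- The boundary-corrected kernel `k^{(s)}` with coefficients `φ = φ(s)` and `ψ = ψ(s)`, not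
truncated: the truncation to `[-1, s]` is left to the domain of integration. -/
def boundaryKernel (k : ℝ → ℝ) (φ ψ u : ℝ) : ℝ := φ * k u + ψ * (u * k u)

lemma boundaryKernel_eq_affine_mul (k : ℝ → ℝ) (φ ψ u : ℝ) :
    boundaryKernel k φ ψ u = (φ + ψ * u) * k u := by
  unfold boundaryKernel
  ring

lemma integrableOn_boundaryKernel {k : ℝ → ℝ} {S : Set ℝ} (hS : IsCompact S)
    (hk : IntegrableOn k S) (φ ψ : ℝ) : IntegrableOn (boundaryKernel k φ ψ) S :=
  (hk.const_mul φ).add ((hk.continuousOn_mul continuousOn_id hS).const_mul ψ)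

namespace SolvesBoundarySystem

variable {k : ℝ → ℝ} {S T : Set ℝ} {φ ψ φ' ψ' : ℝ}

lemma setIntegral_affine_mul_boundaryKernel (h : SolvesBoundarySystem k S φ ψ) (hS : IsCompact S)
    (hk : IntegrableOn k S) (a c : ℝ) :
    ∫ u in S, (a + c * u) * boundaryKernel k φ ψ u = a := by
  have hk₁ : IntegrableOn (fun u => u * k u) S := hk.continuousOn_mul (by fun_prop) hS
  have hk₂ : IntegrableOn (fun u => u ^ 2 * k u) S := hk.continuousOn_mul (by fun_prop) hS
  calc ∫ u in S, (a + c * u) * boundaryKernel k φ ψ u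
      = ∫ u in S, (a * φ * k u + (a * ψ + c * φ) * (u * k u)) + c * ψ * (u ^ 2 * k u) := by
        congr 1 with u
        rw [boundaryKernel_eq_affine_mul]
        ring
    _ = a * φ * (∫ u in S, k u) + (a * ψ + c * φ) * (∫ u in S, u * k u)
          + c * ψ * ∫ u in S, u ^ 2 * k u := by
        have integrable_affine :
            IntegrableOn (fun u => a * φ * k u + (a * ψ + c * φ) * (u * k u)) S :=
          (hk.const_mul _).add (hk₁.const_mul _)
        rw [integral_add integrable_affine (hk₂.const_mul _),
          integral_add (hk.const_mul _) (hk₁.const_mul _)]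
        simp only [integral_const_mul]
    _ = a := by linear_combination a * h.zeroth_moment + c * h.first_moment

lemma setIntegral_boundaryKernel (h : SolvesBoundarySystem k S φ ψ) (hS : IsCompact S)
    (hk : IntegrableOn k S) : ∫ u in S, boundaryKernel k φ ψ u = 1 := by
  simpa using h.setIntegral_affine_mul_boundaryKernel hS hk 1 0

lemma setIntegral_affine_sq_mul (h : SolvesBoundarySystem k S φ ψ) (hS : IsCompact S)
    (hk : IntegrableOn k S) : ∫ u in S, (φ + ψ * u) ^ 2 * k u = φ := by
  simpa only [boundaryKernel_eq_affine_mul, ← mul_assoc, ← sq] using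
    h.setIntegral_affine_mul_boundaryKernel hS hk φ ψ

lemma setIntegral_affine_sub_sq_mul (h : SolvesBoundarySystem k S φ ψ) (hS : IsCompact S)
    (hk : IntegrableOn k S) (a c : ℝ) :
    ∫ u in S, (a + c * u - (φ + ψ * u)) ^ 2 * k u
      = (∫ u in S, (a + c * u) ^ 2 * k u) - 2 * a + φ := by
  have integrable_sq (a c : ℝ) : IntegrableOn (fun u => (a + c * u) ^ 2 * k u) S :=
    hk.continuousOn_mul (by fun_prop) hS
  have integrable_cross :
      IntegrableOn (fun u => 2 * ((a + c * u) * boundaryKernel k φ ψ u)) S :=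
    ((integrableOn_boundaryKernel hS hk φ ψ).continuousOn_mul (by fun_prop) hS).const_mul 2
  have integrable_diff : IntegrableOn
      (fun u => (a + c * u) ^ 2 * k u - 2 * ((a + c * u) * boundaryKernel k φ ψ u)) S :=
    (integrable_sq a c).sub integrable_cross
  calc ∫ u in S, (a + c * u - (φ + ψ * u)) ^ 2 * k u
      = ∫ u in S, (a + c * u) ^ 2 * k u - 2 * ((a + c * u) * boundaryKernel k φ ψ u)
          + (φ + ψ * u) ^ 2 * k u := by
        congr 1 with u
        rw [boundaryKernel_eq_affine_mul]
        ring
    _ = (∫ u in S, (a + c * u) ^ 2 * k u) - 2 * a + φ := by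
        rw [integral_add integrable_diff (integrable_sq φ ψ),
          integral_sub (integrable_sq a c) integrable_cross, integral_const_mul,
          h.setIntegral_affine_mul_boundaryKernel hS hk, h.setIntegral_affine_sq_mul hS hk]

lemma coeff_le_of_subset (h : SolvesBoundarySystem k S φ ψ) (h' : SolvesBoundarySystem k T φ' ψ')
    (hS : IsCompact S) (hT : IsCompact T) (hST : S ⊆ T) (hk : IntegrableOn k T)
    (hk0 : ∀ u ∈ T, 0 ≤ k u) : φ' ≤ φ := by
  have sq_mul_nonneg : ∀ u ∈ T, 0 ≤ (φ' + ψ' * u) ^ 2 * k u := fun u hu =>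
    mul_nonneg (sq_nonneg _) (hk0 u hu)
  have restrict_le : ∫ u in S, (φ' + ψ' * u) ^ 2 * k u ≤ φ' :=
    calc ∫ u in S, (φ' + ψ' * u) ^ 2 * k u
        ≤ ∫ u in T, (φ' + ψ' * u) ^ 2 * k u :=
          setIntegral_mono_set (hk.continuousOn_mul (by fun_prop) hT)
            (ae_restrict_of_forall_mem hT.measurableSet sq_mul_nonneg) hST.eventuallyLE
      _ = φ' := h'.setIntegral_affine_sq_mul hT hk
  have distance_nonneg : 0 ≤ ∫ u in S, (φ' + ψ' * u - (φ + ψ * u)) ^ 2 * k u :=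
    setIntegral_nonneg hS.measurableSet fun u hu => mul_nonneg (sq_nonneg _) (hk0 u (hST hu))
  rw [h.setIntegral_affine_sub_sq_mul hS (hk.mono_set hST)] at distance_nonneg
  linarith

lemma setIntegral_abs_boundaryKernel_le (h : SolvesBoundarySystem k S φ ψ) (hS : IsCompact S)
    (hk : IntegrableOn k S) (hk0 : ∀ u ∈ S, 0 ≤ k u) :
    ∫ u in S, |boundaryKernel k φ ψ u| ≤ ((∫ u in S, k u) + φ) / 2 := by
  have integrable_sq : IntegrableOn (fun u => (φ + ψ * u) ^ 2 * k u) S :=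
    hk.continuousOn_mul (by fun_prop) hS
  calc ∫ u in S, |boundaryKernel k φ ψ u|
      ≤ ∫ u in S, (k u + (φ + ψ * u) ^ 2 * k u) / 2 := by
        refine setIntegral_mono_on (integrableOn_boundaryKernel hS hk φ ψ).abs
          ((hk.add integrable_sq).div_const 2) hS.measurableSet fun u hu => ?_
        have am_gm : |φ + ψ * u| ≤ (1 + (φ + ψ * u) ^ 2) / 2 := by
          nlinarith [sq_nonneg (|φ + ψ * u| - 1), sq_abs (φ + ψ * u)]
        rw [boundaryKernel_eq_affine_mul, abs_mul, abs_of_nonneg (hk0 u hu)]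
        calc |φ + ψ * u| * k u ≤ (1 + (φ + ψ * u) ^ 2) / 2 * k u :=
              mul_le_mul_of_nonneg_right am_gm (hk0 u hu)
          _ = (k u + (φ + ψ * u) ^ 2 * k u) / 2 := by ring
    _ = ((∫ u in S, k u) + φ) / 2 := by
        rw [integral_div, integral_add hk integrable_sq, h.setIntegral_affine_sq_mul hS hk]

end SolvesBoundarySystem

lemma exists_setIntegral_abs_boundaryKernel_le {k φ ψ : ℝ → ℝ} {a c d : ℝ} (hcd : c ≤ d)
    (hk : IntegrableOn k (Icc a d)) (hk0 : ∀ u ∈ Icc a d, 0 ≤ k u)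
    (hφψ : ∀ s ∈ Icc c d, SolvesBoundarySystem k (Icc a s) (φ s) (ψ s)) :
    ∃ C > 0, ∀ s ∈ Icc c d, ∫ u in Icc a s, |boundaryKernel k (φ s) (ψ s) u| ≤ C := by
  have bound (s : ℝ) (hs : s ∈ Icc c d) :
      ∫ u in Icc a s, |boundaryKernel k (φ s) (ψ s) u| ≤ ((∫ u in Icc a d, k u) + φ c) / 2 := by
    have hsub : Icc a s ⊆ Icc a d := Icc_subset_Icc_right hs.2
    have coeff_le : φ s ≤ φ c :=
      (hφψ c ⟨le_rfl, hcd⟩).coeff_le_of_subset (hφψ s hs) isCompact_Icc isCompact_Icc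
        (Icc_subset_Icc_right hs.1) (hk.mono_set hsub) fun u hu => hk0 u (hsub hu)
    have mass_le : ∫ u in Icc a s, k u ≤ ∫ u in Icc a d, k u :=
      setIntegral_mono_set hk (ae_restrict_of_forall_mem measurableSet_Icc hk0) hsub.eventuallyLE
    linarith [(hφψ s hs).setIntegral_abs_boundaryKernel_le isCompact_Icc (hk.mono_set hsub)
      fun u hu => hk0 u (hsub hu)]
  refine ⟨_, ?_, bound⟩
  calc (0 : ℝ) < |∫ u in Icc a c, boundaryKernel k (φ c) (ψ c) u| := by
        rw [(hφψ c ⟨le_rfl, hcd⟩).setIntegral_boundaryKernel isCompact_Icc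
          (hk.mono_set (Icc_subset_Icc_right hcd)), abs_one]
        exact one_pos
    _ ≤ ∫ u in Icc a c, |boundaryKernel k (φ c) (ψ c) u| := abs_integral_le_integral_abs
    _ ≤ _ := bound c ⟨le_rfl, hcd⟩

lemma abs_integral_mul_sub_le {α : Type*} [MeasurableSpace α] {μ : Measure α} {K f : α → ℝ}
    {c η : ℝ} (hK : Integrable K μ) (hK1 : ∫ y, K y ∂μ = 1) (hf : AEStronglyMeasurable f μ)
    (hfc : ∀ᵐ y ∂μ, |f y - c| ≤ η) :
    |(∫ y, K y * f y ∂μ) - c| ≤ η * ∫ y, |K y| ∂μ := by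
  have hKfc : Integrable (fun y => K y * (f y - c)) μ :=
    hK.mul_bdd (c := η) (hf.sub aestronglyMeasurable_const) hfc
  have bias_eq : (∫ y, K y * f y ∂μ) - c = ∫ y, K y * (f y - c) ∂μ := by
    calc (∫ y, K y * f y ∂μ) - c = (∫ y, K y * (f y - c) + K y * c ∂μ) - c := by
          simp only [← mul_add, sub_add_cancel]
      _ = ∫ y, K y * (f y - c) ∂μ := by
          rw [integral_add hKfc (hK.mul_const c), integral_mul_const, hK1, one_mul,
            add_sub_cancel_right]
  have pointwise_le : ∀ᵐ y ∂μ, ‖K y * (f y - c)‖ ≤ η * |K y| := by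
    filter_upwards [hfc] with y hy
    rw [Real.norm_eq_abs, abs_mul, mul_comm]
    exact mul_le_mul_of_nonneg_right hy (abs_nonneg _)
  rw [bias_eq, ← integral_const_mul, ← Real.norm_eq_abs]
  exact norm_integral_le_of_norm_le (hK.abs.const_mul η) pointwise_le

lemma tendsto_biSup_abs_zero {ι α : Type*} {l : Filter ι} {S : ι → Set α} {F : ι → α → ℝ}
    (hF : ∀ ε > 0, ∀ᶠ i in l, ∀ x ∈ S i, |F i x| ≤ ε) :
    Tendsto (fun i => ⨆ x ∈ S i, |F i x|) l (nhds 0) := by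
  rw [Metric.tendsto_nhds]
  intro ε hε
  filter_upwards [hF (ε / 2) (half_pos hε)] with i hi
  rw [Real.dist_eq, sub_zero, abs_of_nonneg
    (Real.iSup_nonneg fun x => Real.iSup_nonneg fun _ => abs_nonneg _)]
  have hε2 : 0 ≤ ε / 2 := (half_pos hε).le
  exact (Real.iSup_le (fun x => Real.iSup_le (hi x) hε2) hε2).trans_lt (half_lt_self hε)

theorem boundary_kernel_uniform_bias_general {k φ ψ lam : ℝ → ℝ}
    (hk : IntegrableOn k (Icc (-1) 1)) (hk0 : ∀ u ∈ Icc (-1) 1, 0 ≤ k u)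
    (hφψ : ∀ s ∈ Icc 0 1, SolvesBoundarySystem k (Icc (-1) s) (φ s) (ψ s))
    (hlam : UniformContinuous lam) :
    Tendsto
      (fun b : ℝ => ⨆ x ∈ Icc (0 : ℝ) b,
        |(∫ y in Icc (-1) (x / b),
            boundaryKernel k (φ (x / b)) (ψ (x / b)) y * lam (x - b * y)) - lam x|)
      (nhdsWithin 0 (Ioi 0)) (nhds 0) := by
  obtain ⟨C, hC, hKC⟩ := exists_setIntegral_abs_boundaryKernel_le zero_le_one hk hk0 hφψ
  refine tendsto_biSup_abs_zero fun ε hε => ?_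
  obtain ⟨δ, hδ, hlamδ⟩ := Metric.uniformContinuous_iff.1 hlam (ε / C) (div_pos hε hC)
  filter_upwards [Ioo_mem_nhdsGT hδ] with b ⟨hb, hbδ⟩ x hx
  have hs : x / b ∈ Icc (0 : ℝ) 1 := ⟨div_nonneg hx.1 hb.le, (div_le_one hb).2 hx.2⟩
  have hkS : IntegrableOn k (Icc (-1) (x / b)) := hk.mono_set (Icc_subset_Icc_right hs.2)
  have oscillation_le : ∀ y ∈ Icc (-1) (x / b), |lam (x - b * y) - lam x| ≤ ε / C := by
    intro y hy
    have hy1 : |y| ≤ 1 := abs_le.2 ⟨hy.1, hy.2.trans hs.2⟩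
    refine (hlamδ ?_).le
    rw [Real.dist_eq, sub_sub_cancel_left, abs_neg, abs_mul, abs_of_pos hb]
    exact (mul_le_of_le_one_right hb.le hy1).trans_lt hbδ
  calc _ ≤ ε / C * ∫ y in Icc (-1) (x / b), |boundaryKernel k (φ (x / b)) (ψ (x / b)) y| :=
        abs_integral_mul_sub_le (integrableOn_boundaryKernel isCompact_Icc hkS _ _)
          ((hφψ _ hs).setIntegral_boundaryKernel isCompact_Icc hkS)
          (hlam.continuous.comp (by fun_prop)).aestronglyMeasurable
          (ae_restrict_of_forall_mem measurableSet_Icc oscillation_le)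
    _ ≤ ε / C * C := mul_le_mul_of_nonneg_left (hKC _ hs) (div_pos hε hC).le
    _ = ε := div_mul_cancel₀ ε hC.ne'

/-- Uniform bias convergence near the left boundary: with boundary kernel
`k^{(s)}(u) = φ(s)k(u) + ψ(s)u k(u)` (coefficients solving the boundary system) and `λ`
bounded and uniformly continuous,
`sup_{x ∈ [0,b]} |∫_{-1}^{x/b} k^{(x/b)}(y) λ(x - by) dy - λ(x)| → 0` as `b → 0+`. -/
theorem boundary_kernel_uniform_bias
    (k : ℝ → ℝ) (hkcont : Continuous k) (hk0 : ∀ u, 0 ≤ k u)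
    (hksupp : ∀ u, u ∉ Set.Icc (-1 : ℝ) 1 → k u = 0)
    (hkint : (∫ u, k u) = 1)
    (hkpos : ∀ u ∈ Set.Ioo (-1 : ℝ) 1, 0 < k u)
    (φb ψb : ℝ → ℝ)
    (hφψ : ∀ s ∈ Set.Ioc (-1 : ℝ) 1,
      φb s * (∫ u in Set.Icc (-1 : ℝ) s, k u)
        + ψb s * (∫ u in Set.Icc (-1 : ℝ) s, u * k u) = 1 ∧
      φb s * (∫ u in Set.Icc (-1 : ℝ) s, u * k u)
        + ψb s * (∫ u in Set.Icc (-1 : ℝ) s, u ^ 2 * k u) = 0)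
    (lam : ℝ → ℝ) (hbd : ∃ K : ℝ, ∀ x, |lam x| ≤ K)
    (hucont : UniformContinuous lam) :
    Tendsto
      (fun b : ℝ => ⨆ x ∈ Set.Icc (0 : ℝ) b,
        |(∫ y in Set.Icc (-1 : ℝ) (x / b),
            (φb (x / b) * k y + ψb (x / b) * (y * k y)) * lam (x - b * y)) - lam x|)
      (nhdsWithin 0 (Set.Ioi 0)) (nhds 0) :=
  boundary_kernel_uniform_bias_general hkcont.integrableOn_Icc (fun u _ => hk0 u)
    (fun s hs => have h := hφψ s ⟨by linarith [hs.1], hs.2⟩; ⟨h.1, h.2⟩) hucont
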